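/- Let 0 < p ≤ 1, let α, β ≥ 0, and let μ be a positive Borel measure on (0, ∞) with ∫_{(0,∞)} (1 + λ)^{-1} dμ(λ) < ∞. Let X = A + iB, where A and B are bounded self-adjoint operators on H, B is positive and invertible, and sin(pπ)·A − cos(pπ)·B is positive and invertible (i.e. X lies in the operator sector V_{pπ} := {X : Im X > 0 and Im(e^{-ipπ}X) < 0}). Then X + λI is invertible for all λ > 0, the Bochner integral f(X) := αI + βX + ∫_{(0,∞)} X(X + λI)^{-1} dμ(λ) exists, and either (β = 0 and μ = 0, in which case f(X) = αI) or f(X) ∈ V_{pπ}, i.e. Im f(X) is positive and invertible and Im(e^{-ipπ} f(X)) is negative and invertible. -/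

import Mathlib

open ContinuousLinearMap MeasureTheory

variable {H : Type*} [NormedAddCommGroup H] [InnerProductSpace ℂ H] [CompleteSpace H]

/-- The imaginary part `(Y - Y*)/(2i)` of a bounded operator. -/
noncomputable def opIm (Y : H →L[ℂ] H) : H →L[ℂ] H := (2 * Complex.I)⁻¹ • (Y - star Y)

/-!
A sector of angle at most `π` is an intersection of two half-planes `Re (u z) > 0` with `Re u ≥ 0`,
so it suffices that `ℜ (u X) > 0` implies `ℜ (u f(X)) > 0` for such `u`. If `ℜ T ≥ c > 0`, then
`0 ≤ (T - c)* (T - c)` gives `T* T ≥ c²`, and likewise `T T* ≥ c²`, so `T` is invertible with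
`‖T⁻¹‖ ≤ c⁻¹`; applied to `T = u (X + λ)` this bounds `R = (X + λ)⁻¹` uniformly in `λ`, and
`λ R = 1 - X R` then gives `‖X R‖ = O((1 + λ)⁻¹)`. Expanding the middle factor of
`X R = R* (X + λ)* X R` shows that `ℜ (u X R) = Re u • (X R)* (X R) + λ R* ℜ (u X) R` is strictly
positive. Strict positivity survives integration against a nonzero measure, because the integrand
is at least some constant `ε > 0` on a set of positive finite measure.
-/

open ComplexStarModule CStarAlgebra

section VectorValuedMarkov

variable {Ω E : Type*} [MeasurableSpace Ω] {μ : Measure Ω} [NormedAddCommGroup E]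
  [NormedSpace ℝ E] [CompleteSpace E] [PartialOrder E] [IsOrderedAddMonoid E] [IsOrderedModule ℝ E]
  [OrderClosedTopology E]

lemma measureReal_smul_le_integral_of_nonneg {f : Ω → E} (hf : Integrable f μ)
    (hf_nonneg : 0 ≤ᵐ[μ] f) (c : E) : μ.real {x | c ≤ f x} • c ≤ ∫ x, f x ∂μ := by
  rcases eq_or_ne (μ {x | c ≤ f x}) ⊤ with h_top | h_top
  · simpa [measureReal_def, h_top] using integral_nonneg_of_ae hf_nonneg
  have hs : NullMeasurableSet {x | c ≤ f x} μ :=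
    aestronglyMeasurable_const.nullMeasurableSet_le hf.aestronglyMeasurable
  calc μ.real {x | c ≤ f x} • c = ∫ _ in {x | c ≤ f x}, c ∂μ := (setIntegral_const c).symm
    _ ≤ ∫ x in {x | c ≤ f x}, f x ∂μ :=
      setIntegral_mono_on₀ (integrableOn_const h_top) hf.integrableOn hs fun _ hx => hx
    _ ≤ ∫ x, f x ∂μ := setIntegral_le_integral hf hf_nonneg

end VectorValuedMarkov

lemma isUnit_of_isUnit_mul_of_isUnit_mul {M : Type*} [Monoid M] {a b c : M}
    (hba : IsUnit (b * a)) (hac : IsUnit (a * c)) : IsUnit a := by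
  obtain ⟨r, hr⟩ := hac.exists_right_inv
  obtain ⟨l, hl⟩ := hba.exists_left_inv
  exact isUnit_iff_exists_and_exists.2
    ⟨⟨c * r, by rw [← mul_assoc, hr]⟩, ⟨l * b, by rw [mul_assoc, hl]⟩⟩

lemma isUnit_of_isUnit_smul {𝕜 R : Type*} [CommSemiring 𝕜] [Semiring R] [Algebra 𝕜 R]
    {u : 𝕜} {a : R} (h : IsUnit (u • a)) : IsUnit a := by
  rw [Algebra.smul_def, (Algebra.commute_algebraMap_left u a).isUnit_mul_iff] at h
  exact h.2

lemma ringInverse_eq_smul_of_isUnit_smul {𝕜 R : Type*} [CommSemiring 𝕜] [Semiring R] [Algebra 𝕜 R]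
    {u : 𝕜} {a : R} (hua : IsUnit (u • a)) : Ring.inverse a = u • Ring.inverse (u • a) := by
  have h : a * (u • Ring.inverse (u • a)) = 1 := by
    rw [mul_smul_comm, ← smul_mul_assoc, Ring.mul_inverse_cancel _ hua]
  rw [← Ring.inverse_mul_cancel_left a (u • Ring.inverse (u • a))
    (isUnit_of_isUnit_smul hua), h, mul_one]

section Resolvent

variable {𝒜 : Type*} [NormedRing 𝒜] [NormedAlgebra ℂ 𝒜] {X : 𝒜}

lemma norm_mul_ringInverse_add_smul_one_le {M l : ℝ} (hl : 0 < l)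
    (hU : IsUnit (X + (l : ℂ) • 1)) (hM : ‖Ring.inverse (X + (l : ℂ) • 1)‖ ≤ M) :
    ‖X * Ring.inverse (X + (l : ℂ) • 1)‖ ≤ ‖X‖ * (M + (‖(1 : 𝒜)‖ + ‖X‖ * M)) * (1 + l)⁻¹ := by
  set R := Ring.inverse (X + (l : ℂ) • 1)
  have h_smul : (l : ℂ) • R = 1 - X * R := by
    rw [eq_sub_iff_add_eq', ← Ring.mul_inverse_cancel _ hU, add_mul, smul_mul_assoc, one_mul]
  have h_norm : l * ‖R‖ ≤ ‖(1 : 𝒜)‖ + ‖X‖ * M := calc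
    l * ‖R‖ = ‖1 - X * R‖ := by rw [← h_smul, norm_smul, Complex.norm_of_nonneg hl.le]
    _ ≤ ‖(1 : 𝒜)‖ + ‖X‖ * ‖R‖ := (norm_sub_le _ _).trans (by gcongr; exact norm_mul_le _ _)
    _ ≤ ‖(1 : 𝒜)‖ + ‖X‖ * M := by gcongr
  rw [le_mul_inv_iff₀ (by positivity)]
  calc ‖X * R‖ * (1 + l) ≤ ‖X‖ * ‖R‖ * (1 + l) := by gcongr; exact norm_mul_le _ _
    _ = ‖X‖ * (‖R‖ + l * ‖R‖) := by ring
    _ ≤ ‖X‖ * (M + (‖(1 : 𝒜)‖ + ‖X‖ * M)) := by gcongr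

variable [CompleteSpace 𝒜]

lemma continuousOn_mul_ringInverse_add_smul_one
    (hU : ∀ l : ℝ, 0 < l → IsUnit (X + (l : ℂ) • 1)) :
    ContinuousOn (fun l : ℝ => X * Ring.inverse (X + (l : ℂ) • 1)) (Set.Ioi 0) := by
  intro l hl
  have h_inv : ContinuousAt Ring.inverse (X + (l : ℂ) • 1) := by
    obtain ⟨w, hw⟩ := hU l hl
    exact hw ▸ NormedRing.inverse_continuousAt w
  have h_comp : ContinuousAt (fun l : ℝ => Ring.inverse (X + (l : ℂ) • (1 : 𝒜))) l :=
    h_inv.comp' (f := fun l : ℝ => X + (l : ℂ) • (1 : 𝒜)) (by fun_prop)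
  exact (continuousAt_const.mul h_comp).continuousWithinAt

lemma integrable_mul_ringInverse_add_smul_one {μ : Measure ℝ} (hμ : ∀ᵐ l ∂μ, 0 < l)
    (hμ_int : Integrable (fun l : ℝ => (1 + l)⁻¹) μ) {M : ℝ}
    (hU : ∀ l : ℝ, 0 < l → IsUnit (X + (l : ℂ) • 1))
    (hM : ∀ l : ℝ, 0 < l → ‖Ring.inverse (X + (l : ℂ) • 1)‖ ≤ M) :
    Integrable (fun l : ℝ => X * Ring.inverse (X + (l : ℂ) • 1)) μ := by
  have h_meas : AEStronglyMeasurable (fun l : ℝ => X * Ring.inverse (X + (l : ℂ) • 1)) μ := by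
    rw [← Measure.restrict_eq_self_of_ae_mem (s := Set.Ioi 0) hμ]
    exact (continuousOn_mul_ringInverse_add_smul_one hU).aestronglyMeasurable measurableSet_Ioi
  refine (hμ_int.const_mul (‖X‖ * (M + (‖(1 : 𝒜)‖ + ‖X‖ * M)))).mono' h_meas ?_
  filter_upwards [hμ] with l hl
  exact norm_mul_ringInverse_add_smul_one_le hl (hU l hl) (hM l hl)

end Resolvent

section RealPart

variable {R : Type*} [Ring R] [StarRing R] [Algebra ℂ R] [StarModule ℂ R]

lemma coe_realPart_star_conjugate (a r : R) : (ℜ (star r * a * r) : R) = star r * ℜ a * r := by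
  simp only [realPart_apply_coe, star_mul, star_star, mul_smul_comm, smul_mul_assoc, mul_add,
    add_mul, mul_assoc]

lemma mul_ringInverse_add_smul_one_eq {X : R} {l : ℝ} (hU : IsUnit (X + (l : ℂ) • 1)) :
    X * Ring.inverse (X + (l : ℂ) • 1) =
      star (X * Ring.inverse (X + (l : ℂ) • 1)) * (X * Ring.inverse (X + (l : ℂ) • 1)) +
      (l : ℂ) • (star (Ring.inverse (X + (l : ℂ) • 1)) * X * Ring.inverse (X + (l : ℂ) • 1)) := by
  set S := X + (l : ℂ) • (1 : R) with hS
  set T := Ring.inverse S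
  have h_star : star S = star X + (l : ℂ) • 1 := by simp [hS]
  calc X * T = star (S * T) * (X * T) := by rw [Ring.mul_inverse_cancel _ hU, star_one, one_mul]
    _ = star T * (star X + (l : ℂ) • 1) * (X * T) := by rw [star_mul, h_star]
    _ = star (X * T) * (X * T) + (l : ℂ) • (star T * X * T) := by
      simp only [star_mul, mul_add, add_mul, mul_smul_comm, smul_mul_assoc, mul_one, mul_assoc]

lemma coe_realPart_smul_mul_ringInverse {X : R} {l : ℝ} (hU : IsUnit (X + (l : ℂ) • 1)) (u : ℂ) :
    (ℜ (u • (X * Ring.inverse (X + (l : ℂ) • 1))) : R) =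
      u.re • (star (X * Ring.inverse (X + (l : ℂ) • 1)) * (X * Ring.inverse (X + (l : ℂ) • 1))) +
      l • (star (Ring.inverse (X + (l : ℂ) • 1)) * ℜ (u • X) *
        Ring.inverse (X + (l : ℂ) • 1)) := by
  set T := Ring.inverse (X + (l : ℂ) • 1)
  have h_sa : IsSelfAdjoint (star (X * T) * (X * T)) := .star_mul_self _
  have h_smul : u • (X * T) = u • (star (X * T) * (X * T)) + l • (star T * (u • X) * T) := by
    conv_lhs => rw [mul_ringInverse_add_smul_one_eq hU]
    rw [smul_add, Complex.coe_smul l (star T * X * T), smul_comm u l, mul_smul_comm, smul_mul_assoc]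
  rw [h_smul, map_add, map_smul ℜ l, AddSubgroup.coe_add, selfAdjoint.val_smul l,
    coe_realPart_star_conjugate, realPart_smul u (_ * _), h_sa.imaginaryPart, smul_zero, sub_zero,
    selfAdjoint.val_smul, h_sa.coe_realPart]

lemma coe_realPart_smul_ofReal_smul_one (u : ℂ) (r : ℝ) :
    (ℜ (u • (r : ℂ) • (1 : R)) : R) = (u.re * r) • 1 := by
  rw [smul_smul, realPart_smul, (IsSelfAdjoint.one R).imaginaryPart, smul_zero, sub_zero,
    Complex.re_mul_ofReal, selfAdjoint.val_smul, (IsSelfAdjoint.one R).coe_realPart]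

end RealPart

section CStarAlgebra

variable {𝒜 : Type*} [CStarAlgebra 𝒜]

/-- The real part of an element of a C⋆-algebra as a continuous `ℝ`-linear map into the algebra
itself, so that it can be interchanged with Bochner integrals. -/
noncomputable def coeRealPartCLM : 𝒜 →L[ℝ] 𝒜 :=
  (selfAdjoint.submodule ℝ 𝒜).subtypeL ∘L selfAdjointPartL ℝ 𝒜

lemma coeRealPartCLM_apply (a : 𝒜) : coeRealPartCLM a = ℜ a := rfl

/-- The value at `X` of the operator monotone function `x ↦ α + βx + ∫ x/(x+λ) dμ(λ)`. The integral
is a Bochner integral, with the junk value `0` when the integrand is not integrable. -/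
noncomputable def operatorMonotoneFun (α β : ℝ) (μ : Measure ℝ) (X : 𝒜) : 𝒜 :=
  (α : ℂ) • 1 + (β : ℂ) • X + ∫ l, X * Ring.inverse (X + (l : ℂ) • 1) ∂μ

lemma coe_realPart_smul_operatorMonotoneFun (u : ℂ) (α β : ℝ) {μ : Measure ℝ} {X : 𝒜}
    (hI : Integrable (fun l : ℝ => X * Ring.inverse (X + (l : ℂ) • 1)) μ) :
    (ℜ (u • operatorMonotoneFun α β μ X) : 𝒜) = (u.re * α) • (1 : 𝒜) + β • (ℜ (u • X) : 𝒜) +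
      ∫ l, (ℜ (u • (X * Ring.inverse (X + (l : ℂ) • 1))) : 𝒜) ∂μ := by
  have h_integral := (coeRealPartCLM (𝒜 := 𝒜)).integral_comp_comm (hI.smul u)
  simp only [coeRealPartCLM_apply, Pi.smul_apply, integral_smul] at h_integral
  rw [operatorMonotoneFun, smul_add, smul_add, map_add, map_add, AddSubgroup.coe_add,
    AddSubgroup.coe_add, coe_realPart_smul_ofReal_smul_one, h_integral,
    Complex.coe_smul, smul_comm u β, map_smul ℜ β, selfAdjoint.val_smul]

lemma exp_neg_mul_I (θ : ℝ) :
    Complex.exp (-θ * Complex.I) = Real.cos θ - Real.sin θ * Complex.I := by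
  rw [Complex.exp_mul_I, Complex.cos_neg, Complex.sin_neg, Complex.ofReal_cos, Complex.ofReal_sin]
  ring

lemma re_I_mul_exp_neg_mul_I (θ : ℝ) :
    (Complex.I * Complex.exp (-θ * Complex.I)).re = Real.sin θ := by
  rw [exp_neg_mul_I]
  simp [-Complex.ofReal_sin, -Complex.ofReal_cos]

variable [PartialOrder 𝒜] {θ : ℝ}

variable (𝒜) in
/-- The operator sector `V_θ` of a C⋆-algebra: `ℑ X > 0` and `ℑ (e^{-iθ} X) < 0`, in the sense of
strict positivity. -/
def operatorSector (θ : ℝ) : Set 𝒜 :=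
  {X | IsStrictlyPositive (ℑ X : 𝒜) ∧
    IsStrictlyPositive (-(ℑ (Complex.exp (-θ * Complex.I) • X) : 𝒜))}

lemma mem_operatorSector_iff_realPart {X : 𝒜} :
    X ∈ operatorSector 𝒜 θ ↔ IsStrictlyPositive (ℜ ((-Complex.I) • X) : 𝒜) ∧
      IsStrictlyPositive (ℜ ((Complex.I * Complex.exp (-θ * Complex.I)) • X) : 𝒜) := by
  simp [operatorSector, mul_smul]

lemma add_I_smul_mem_operatorSector_iff {A B : 𝒜} (hA : IsSelfAdjoint A) (hB : IsSelfAdjoint B) :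
    A + Complex.I • B ∈ operatorSector 𝒜 θ ↔
      IsStrictlyPositive B ∧ IsStrictlyPositive (Real.sin θ • A - Real.cos θ • B) := by
  have h_re : (ℜ (A + Complex.I • B) : 𝒜) = A := by
    rw [map_add, realPart_I_smul, hB.imaginaryPart, neg_zero, add_zero, hA.coe_realPart]
  have h_im : (ℑ (A + Complex.I • B) : 𝒜) = B := by
    rw [map_add, imaginaryPart_I_smul, hA.imaginaryPart, zero_add, hB.coe_realPart]
  have h_rot : -(ℑ (Complex.exp (-θ * Complex.I) • (A + Complex.I • B)) : 𝒜) =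
      Real.sin θ • A - Real.cos θ • B := by
    rw [imaginaryPart_smul, AddSubgroup.coe_add, selfAdjoint.val_smul, selfAdjoint.val_smul, h_re,
      h_im, exp_neg_mul_I]
    simp [-Complex.ofReal_sin, -Complex.ofReal_cos, sub_eq_add_neg]
  rw [operatorSector, Set.mem_ofPred_eq, h_im, h_rot]

variable [StarOrderedRing 𝒜]

lemma isStrictlyPositive_iff_exists_algebraMap_le {a : 𝒜} :
    IsStrictlyPositive a ↔ ∃ c : ℝ, 0 < c ∧ algebraMap ℝ 𝒜 c ≤ a := by
  refine ⟨fun ha => ?_, fun ⟨c, hc, hca⟩ => (isStrictlyPositive_algebraMap hc).of_le hca⟩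
  rcases subsingleton_or_nontrivial 𝒜
  · exact ⟨1, one_pos, (Subsingleton.elim _ _).le⟩
  exact (CFC.exists_pos_algebraMap_le_iff ha.isSelfAdjoint).2 fun x hx => ha.spectrum_pos hx

theorem isStrictlyPositive_integral {Ω : Type*} [MeasurableSpace Ω] {μ : Measure Ω} (hμ : μ ≠ 0)
    {f : Ω → 𝒜} (hf : Integrable f μ) (hf_pos : ∀ᵐ x ∂μ, IsStrictlyPositive (f x)) :
    IsStrictlyPositive (∫ x, f x ∂μ) := by
  nontriviality 𝒜
  obtain ⟨n, hn⟩ : ∃ n : ℕ, μ {x | algebraMap ℝ 𝒜 (1 / (n + 1)) ≤ f x} ≠ 0 := by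
    by_contra! h_null
    refine hμ (ae_eq_bot.1 (Filter.eventually_false_iff_eq_bot.1 ?_))
    filter_upwards [hf_pos,
      ae_all_iff.2 fun n => measure_eq_zero_iff_ae_notMem.1 (h_null n)] with x hx hx_not
    obtain ⟨c, hc, hcx⟩ := isStrictlyPositive_iff_exists_algebraMap_le.1 hx
    obtain ⟨n, hnc⟩ := exists_nat_one_div_lt hc
    exact hx_not n ((algebraMap_mono 𝒜 hnc.le).trans hcx)
  set ε : ℝ := 1 / (n + 1)
  have hε : 0 < ε := by positivity
  have h_sub : {x | algebraMap ℝ 𝒜 ε ≤ f x} ⊆ {x | ε ≤ ‖f x‖} := fun x hx => calc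
    ε = ‖algebraMap ℝ 𝒜 ε‖ := by rw [norm_algebraMap', Real.norm_of_nonneg hε.le]
    _ ≤ ‖f x‖ := norm_le_norm_of_nonneg_of_le (isStrictlyPositive_algebraMap hε).nonneg hx
  have h_fin : μ {x | algebraMap ℝ 𝒜 ε ≤ f x} ≠ ⊤ :=
    ((measure_mono h_sub).trans_lt (hf.measure_norm_ge_lt_top hε)).ne
  exact ((isStrictlyPositive_algebraMap hε).smul (ENNReal.toReal_pos hn h_fin)).of_le <|
    measureReal_smul_le_integral_of_nonneg hf (hf_pos.mono fun _ hx => hx.nonneg) _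

section PositiveRealPart

variable {T : 𝒜} {c : ℝ}

lemma algebraMap_sq_le_star_mul_self (hc : 0 ≤ c) (hT : algebraMap ℝ 𝒜 c ≤ ℜ T) :
    algebraMap ℝ 𝒜 (c ^ 2) ≤ star T * T := by
  have h_expand : star (T - algebraMap ℝ 𝒜 c) * (T - algebraMap ℝ 𝒜 c) =
      star T * T - (2 * c) • (ℜ T : 𝒜) + algebraMap ℝ 𝒜 (c ^ 2) := by
    simp only [realPart_apply_coe, Algebra.algebraMap_eq_smul_one, star_sub, star_smul, star_one,
      star_trivial, sub_mul, mul_sub, smul_mul_assoc, mul_smul_comm, one_mul, mul_one]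
    module
  calc algebraMap ℝ 𝒜 (c ^ 2) = (2 * c) • algebraMap ℝ 𝒜 c - algebraMap ℝ 𝒜 (c ^ 2) := by
        simp only [Algebra.algebraMap_eq_smul_one]; module
    _ ≤ (2 * c) • (ℜ T : 𝒜) - algebraMap ℝ 𝒜 (c ^ 2) := by gcongr
    _ ≤ star T * T := by
      have h_nonneg := h_expand ▸ star_mul_self_nonneg (T - algebraMap ℝ 𝒜 c)
      rw [← sub_nonneg]
      convert h_nonneg using 1
      abel

theorem isUnit_of_isStrictlyPositive_realPart (hT : IsStrictlyPositive (ℜ T : 𝒜)) : IsUnit T := by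
  have isUnit_star_mul_self {S : 𝒜} (hS : IsStrictlyPositive (ℜ S : 𝒜)) : IsUnit (star S * S) := by
    obtain ⟨c, hc, hcS⟩ := isStrictlyPositive_iff_exists_algebraMap_le.1 hS
    exact ((isStrictlyPositive_algebraMap (by positivity)).of_le
      (algebraMap_sq_le_star_mul_self hc.le hcS)).isUnit
  have h_star : (ℜ (star T) : 𝒜) = ℜ T := by simp [realPart_apply_coe, add_comm]
  refine isUnit_of_isUnit_mul_of_isUnit_mul (isUnit_star_mul_self hT) (c := star T) ?_
  simpa only [star_star] using isUnit_star_mul_self (S := star T) (h_star ▸ hT)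

lemma norm_ringInverse_le_inv (hc : 0 < c) (hT : algebraMap ℝ 𝒜 c ≤ ℜ T) :
    ‖Ring.inverse T‖ ≤ c⁻¹ := by
  have hU : IsUnit T :=
    isUnit_of_isStrictlyPositive_realPart ((isStrictlyPositive_algebraMap hc).of_le hT)
  set R := Ring.inverse T
  have hTR : T * R = 1 := Ring.mul_inverse_cancel _ hU
  have h_le : (c ^ 2) • (star R * R) ≤ 1 := calc
    (c ^ 2) • (star R * R) = star R * algebraMap ℝ 𝒜 (c ^ 2) * R := by
      simp only [Algebra.algebraMap_eq_smul_one, mul_smul_comm, smul_mul_assoc, mul_one]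
    _ ≤ star R * (star T * T) * R :=
      star_left_conjugate_le_conjugate (algebraMap_sq_le_star_mul_self hc.le hT) R
    _ = star (T * R) * (T * R) := by simp only [star_mul, mul_assoc]
    _ = 1 := by rw [hTR, star_one, one_mul]
  have h_sq : (c * ‖R‖) ^ 2 ≤ 1 := calc
    (c * ‖R‖) ^ 2 = ‖(c ^ 2) • (star R * R)‖ := by
      rw [norm_smul, CStarRing.norm_star_mul_self, Real.norm_of_nonneg (by positivity)]; ring
    _ ≤ 1 := (norm_le_one_iff_of_nonneg _
      (smul_nonneg (by positivity) (star_mul_self_nonneg R))).2 h_le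
  rw [← one_div, le_div_iff₀' hc]
  exact (sq_le_one_iff₀ (by positivity)).1 h_sq

end PositiveRealPart

section HalfPlane

variable {u : ℂ} {X : 𝒜}

lemma realPart_smul_le_realPart_smul_add_smul_one (hu : 0 ≤ u.re) {l : ℝ} (hl : 0 ≤ l) :
    (ℜ (u • X) : 𝒜) ≤ ℜ (u • (X + (l : ℂ) • 1)) := by
  rw [smul_add, map_add, AddSubgroup.coe_add, coe_realPart_smul_ofReal_smul_one,
    le_add_iff_nonneg_right]
  exact smul_nonneg (by positivity) zero_le_one

lemma isUnit_add_smul_one_of_isStrictlyPositive (hu : 0 ≤ u.re)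
    (hX : IsStrictlyPositive (ℜ (u • X) : 𝒜)) {l : ℝ} (hl : 0 ≤ l) :
    IsUnit (X + (l : ℂ) • 1) :=
  isUnit_of_isUnit_smul <| isUnit_of_isStrictlyPositive_realPart <|
    hX.of_le (realPart_smul_le_realPart_smul_add_smul_one hu hl)

lemma exists_norm_ringInverse_add_smul_one_le (hu : 0 ≤ u.re)
    (hX : IsStrictlyPositive (ℜ (u • X) : 𝒜)) :
    ∃ M : ℝ, ∀ l : ℝ, 0 < l → ‖Ring.inverse (X + (l : ℂ) • 1)‖ ≤ M := by
  obtain ⟨c, hc, hcX⟩ := isStrictlyPositive_iff_exists_algebraMap_le.1 hX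
  refine ⟨‖u‖ * c⁻¹, fun l hl => ?_⟩
  have hS := realPart_smul_le_realPart_smul_add_smul_one (X := X) hu hl.le
  rw [ringInverse_eq_smul_of_isUnit_smul (isUnit_of_isStrictlyPositive_realPart (hX.of_le hS)),
    norm_smul]
  gcongr
  exact norm_ringInverse_le_inv hc (hcX.trans hS)

theorem integrable_mul_ringInverse_of_isStrictlyPositive (hu : 0 ≤ u.re)
    (hX : IsStrictlyPositive (ℜ (u • X) : 𝒜)) {μ : Measure ℝ} (hμ : ∀ᵐ l ∂μ, 0 < l)
    (hμ_int : Integrable (fun l : ℝ => (1 + l)⁻¹) μ) :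
    Integrable (fun l : ℝ => X * Ring.inverse (X + (l : ℂ) • 1)) μ := by
  obtain ⟨M, hM⟩ := exists_norm_ringInverse_add_smul_one_le hu hX
  exact integrable_mul_ringInverse_add_smul_one hμ hμ_int
    (fun l hl => isUnit_add_smul_one_of_isStrictlyPositive hu hX hl.le) hM

lemma isStrictlyPositive_realPart_smul_mul_ringInverse (hu : 0 ≤ u.re)
    (hX : IsStrictlyPositive (ℜ (u • X) : 𝒜)) {l : ℝ} (hl : 0 < l) :
    IsStrictlyPositive (ℜ (u • (X * Ring.inverse (X + (l : ℂ) • 1))) : 𝒜) := by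
  have hU := isUnit_add_smul_one_of_isStrictlyPositive hu hX hl.le
  rw [coe_realPart_smul_mul_ringInverse hU]
  exact .nonneg_add (smul_nonneg hu (star_mul_self_nonneg _))
    (.smul hl (hU.ringInverse.isStrictlyPositive_star_left_conjugate_iff.2 hX))

end HalfPlane

theorem isStrictlyPositive_realPart_smul_operatorMonotoneFun {u : ℂ} (hu : 0 ≤ u.re)
    {α β : ℝ} (hα : 0 ≤ α) (hβ : 0 ≤ β) {μ : Measure ℝ} (hμ : ∀ᵐ l ∂μ, 0 < l)
    (hμ_int : Integrable (fun l : ℝ => (1 + l)⁻¹) μ) (hβμ : β ≠ 0 ∨ μ ≠ 0) {X : 𝒜}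
    (hX : IsStrictlyPositive (ℜ (u • X) : 𝒜)) :
    IsStrictlyPositive (ℜ (u • operatorMonotoneFun α β μ X) : 𝒜) := by
  have hI := integrable_mul_ringInverse_of_isStrictlyPositive hu hX hμ hμ_int
  have h_const : 0 ≤ (u.re * α) • (1 : 𝒜) := smul_nonneg (by positivity) zero_le_one
  have h_pos : ∀ᵐ l : ℝ ∂μ,
      IsStrictlyPositive (ℜ (u • (X * Ring.inverse (X + (l : ℂ) • 1))) : 𝒜) :=
    hμ.mono fun l hl => isStrictlyPositive_realPart_smul_mul_ringInverse hu hX hl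
  rw [coe_realPart_smul_operatorMonotoneFun u α β hI]
  rcases hβμ with hβ₀ | hμ₀
  · have h_linear := hX.smul (hβ.lt_of_ne' hβ₀)
    exact (IsStrictlyPositive.nonneg_add h_const h_linear).add_nonneg
      (integral_nonneg_of_ae (h_pos.mono fun _ hl => hl.nonneg))
  · exact .nonneg_add (add_nonneg h_const (smul_nonneg hβ hX.nonneg))
      (isStrictlyPositive_integral hμ₀ (coeRealPartCLM.integrable_comp (hI.smul u)) h_pos)

theorem stmt19_general (hθ : 0 ≤ Real.sin θ) {α β : ℝ} (hα : 0 ≤ α) (hβ : 0 ≤ β) {μ : Measure ℝ}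
    (hμ : ∀ᵐ l ∂μ, 0 < l) (hμ_int : Integrable (fun l : ℝ => (1 + l)⁻¹) μ) {X : 𝒜}
    (hX : X ∈ operatorSector 𝒜 θ) :
    (∀ l : ℝ, 0 < l → IsUnit (X + (l : ℂ) • 1)) ∧
    Integrable (fun l : ℝ => X * Ring.inverse (X + (l : ℂ) • 1)) μ ∧
    ((β = 0 ∧ μ = 0 ∧ operatorMonotoneFun α β μ X = (α : ℂ) • 1) ∨
      operatorMonotoneFun α β μ X ∈ operatorSector 𝒜 θ) := by
  obtain ⟨hX_im, hX_rot⟩ := mem_operatorSector_iff_realPart.1 hX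
  have hu_im : 0 ≤ (-Complex.I).re := by simp
  have hu_rot := hθ.trans_eq (re_I_mul_exp_neg_mul_I θ).symm
  refine ⟨fun l hl => isUnit_add_smul_one_of_isStrictlyPositive hu_im hX_im hl.le,
    integrable_mul_ringInverse_of_isStrictlyPositive hu_im hX_im hμ hμ_int, ?_⟩
  by_cases hβμ : β = 0 ∧ μ = 0
  · obtain ⟨rfl, rfl⟩ := hβμ
    simp [operatorMonotoneFun]
  rw [not_and_or] at hβμ
  exact .inr <| mem_operatorSector_iff_realPart.2
    ⟨isStrictlyPositive_realPart_smul_operatorMonotoneFun hu_im hα hβ hμ hμ_int hβμ hX_im,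
      isStrictlyPositive_realPart_smul_operatorMonotoneFun hu_rot hα hβ hμ hμ_int hβμ hX_rot⟩

end CStarAlgebra

section BoundedOperators

lemma isStrictlyPositive_iff_isPositive_and_isUnit {𝕜 E : Type*} [RCLike 𝕜] [NormedAddCommGroup E]
    [InnerProductSpace 𝕜 E] {T : E →L[𝕜] E} :
    IsStrictlyPositive T ↔ T.IsPositive ∧ IsUnit T := by
  rw [IsStrictlyPositive.iff_of_unital, nonneg_iff_isPositive]

lemma opIm_eq_imaginaryPart (Y : H →L[ℂ] H) : opIm Y = ℑ Y := by
  rw [opIm, imaginaryPart_apply_coe, ← Complex.coe_smul, smul_smul]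
  simp [mul_comm]

lemma mem_operatorSector_iff_opIm {θ : ℝ} {Y : H →L[ℂ] H} :
    Y ∈ operatorSector (H →L[ℂ] H) θ ↔ (opIm Y).IsPositive ∧ IsUnit (opIm Y) ∧
      (-(opIm (Complex.exp (-θ * Complex.I) • Y))).IsPositive ∧
      IsUnit (opIm (Complex.exp (-θ * Complex.I) • Y)) := by
  simp only [operatorSector, Set.mem_ofPred_eq, ← opIm_eq_imaginaryPart,
    isStrictlyPositive_iff_isPositive_and_isUnit, IsUnit.neg_iff, and_assoc]

end BoundedOperators

/-- Sector preservation for non-negative operator monotone functions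
`f(x) = α + βx + ∫_{(0,∞)} x/(x+λ) dμ(λ)`: if `X = A + iB` lies in the operator sector
`V_{pπ}` (i.e. `Im X > 0` and `Im(e^{-ipπ}X) < 0`), then `X + λI` is invertible for `λ > 0`,
the Bochner integral defining `f(X) = αI + βX + ∫ X(X+λI)⁻¹ dμ(λ)` exists, and either
`β = 0` and `μ = 0` (in which case `f(X) = αI`), or `f(X) ∈ V_{pπ}`, i.e. `Im f(X) > 0` and
`Im(e^{-ipπ} f(X)) < 0`. -/
theorem stmt19 [TopologicalSpace.SeparableSpace H] (hinf : ¬ FiniteDimensional ℂ H)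
    (p : ℝ) (hp0 : 0 < p) (hp1 : p ≤ 1)
    (α β : ℝ) (hα : 0 ≤ α) (hβ : 0 ≤ β)
    (μ : Measure ℝ) (hμs : μ (Set.Ioi (0 : ℝ))ᶜ = 0)
    (hμint : Integrable (fun l : ℝ => (1 + l)⁻¹) μ)
    (A B X : H →L[ℂ] H) (hA : IsSelfAdjoint A) (hB : IsSelfAdjoint B)
    (hBpos : B.IsPositive) (hBU : IsUnit B)
    (hsec :
      (Real.sin (p * Real.pi) • A - Real.cos (p * Real.pi) • B).IsPositive ∧
        IsUnit (Real.sin (p * Real.pi) • A - Real.cos (p * Real.pi) • B))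
    (hX : X = A + Complex.I • B)
    (fX : H →L[ℂ] H)
    (hfX : fX = (α : ℂ) • 1 + (β : ℂ) • X +
        ∫ l, X * Ring.inverse (X + (l : ℂ) • 1) ∂μ) :
    (∀ l : ℝ, 0 < l → IsUnit (X + (l : ℂ) • 1)) ∧
    Integrable (fun l : ℝ => X * Ring.inverse (X + (l : ℂ) • 1)) μ ∧
    ((β = 0 ∧ μ = 0 ∧ fX = (α : ℂ) • 1) ∨
      ((opIm fX).IsPositive ∧ IsUnit (opIm fX) ∧
        (-(opIm (Complex.exp (-(p * Real.pi : ℝ) * Complex.I) • fX))).IsPositive ∧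
        IsUnit (opIm (Complex.exp (-(p * Real.pi : ℝ) * Complex.I) • fX)))) := by
  have hθ : 0 ≤ Real.sin (p * Real.pi) :=
    Real.sin_nonneg_of_nonneg_of_le_pi (by positivity) (mul_le_of_le_one_left Real.pi_nonneg hp1)
  have hX_mem := (add_I_smul_mem_operatorSector_iff hA hB).2
    ⟨isStrictlyPositive_iff_isPositive_and_isUnit.2 ⟨hBpos, hBU⟩,
      isStrictlyPositive_iff_isPositive_and_isUnit.2 hsec⟩
  rw [hfX, hX, ← mem_operatorSector_iff_opIm]
  exact stmt19_general hθ hα hβ hμs hμint hX_mem
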